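/- arXiv:1002.0419 — 2 statements merged into one kernel-verified Lean document; each statement's English description precedes it below -/
import Mathlib

section
/- Let A be a commutative noetherian local ring, let x, y ∈ A be a regular exact pair of zero divisors, and let a, b ∈ A be elements such that a or b is weakly regular on the A-module A/(x, y). Then there are isomorphisms of A-modules: (a) Hom_A(H_a, G_b) ≅ Hom_A(H_b, G_a) ≅ G_{ab}; (b) Hom_A(G_a, H_b) ≅ Hom_A(G_b, H_a) ≅ H_{ab}. -/
/-!
Formalization of results from "Construction of totally reflexive modules
from an exact pair of zero divisors" by Henrik Holm.
-/

noncomputable section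

/-- Non-units `x, y` in `A` form an *exact pair of zero divisors* if
`Ann_A(x) = (y)` and `Ann_A(y) = (x)`. -/
def IsExactZeroDivisorPair {A : Type*} [CommRing A] (x y : A) : Prop :=
  ¬ IsUnit x ∧ ¬ IsUnit y ∧
    (∀ a : A, a * x = 0 ↔ a ∈ Ideal.span {y}) ∧
    (∀ a : A, a * y = 0 ↔ a ∈ Ideal.span {x})

open Matrix in
/-- The matrix `γ_a = [[x, a], [0, y]]`. -/
def gammaMat {A : Type*} [CommRing A] (x y a : A) : Matrix (Fin 2) (Fin 2) A :=
  !![x, a; 0, y]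

open Matrix in
/-- The matrix `η_a = [[y, -a], [0, x]]`. -/
def etaMat {A : Type*} [CommRing A] (x y a : A) : Matrix (Fin 2) (Fin 2) A :=
  !![y, -a; 0, x]

/-- `G_a`, the cokernel of `γ_a : A² → A²`. -/
abbrev Gmod {A : Type*} [CommRing A] (x y a : A) : Type _ :=
  (Fin 2 → A) ⧸ LinearMap.range (Matrix.toLin' (gammaMat x y a))

/-- `H_a`, the cokernel of `η_a : A² → A²`. -/
abbrev Hmod {A : Type*} [CommRing A] (x y a : A) : Type _ :=
  (Fin 2 → A) ⧸ LinearMap.range (Matrix.toLin' (etaMat x y a))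

theorem mem_range_gamma {A : Type*} [CommRing A] (x y a : A) (v : Fin 2 → A) :
    v ∈ LinearMap.range (Matrix.toLin' (gammaMat x y a)) ↔
      ∃ s t, v 0 = x * s + a * t ∧ v 1 = y * t := by
  constructor
  · rintro ⟨w, rfl⟩
    exact ⟨w 0, w 1, by simp [gammaMat, Matrix.mulVec, dotProduct, Fin.sum_univ_two],
      by simp [gammaMat, Matrix.mulVec, dotProduct, Fin.sum_univ_two]⟩
  · rintro ⟨s, t, h0, h1⟩
    refine ⟨![s, t], ?_⟩
    ext i
    fin_cases i
    · simp [gammaMat, Matrix.mulVec, dotProduct, Fin.sum_univ_two, h0]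
    · simp [gammaMat, Matrix.mulVec, dotProduct, Fin.sum_univ_two, h1]

theorem eta_eq_gamma {A : Type*} [CommRing A] (x y a : A) :
    etaMat x y a = gammaMat y x (-a) := rfl

theorem main_aux {A : Type*} [CommRing A] {x y : A}
    (hx : ∀ a : A, a * x = 0 ↔ ∃ c, a = y * c)
    (hy : ∀ a : A, a * y = 0 ↔ ∃ c, a = x * c)
    (hreg : ∀ s t : A, x * s = y * t → x * s = 0) {a b : A} (ε : A) (hε : ε * ε = 1)
    (hab : ∀ q : A, (∃ s t, a * q = x * s + y * t) → (∃ s t, b * q = x * s + y * t) →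
      ∃ s t, q = x * s + y * t)
    (NH NG N : Submodule A (Fin 2 → A))
    (hH : ∀ v, v ∈ NH ↔ ∃ s t, v 0 = y * s + (-a) * t ∧ v 1 = x * t)
    (hG : ∀ v, v ∈ NG ↔ ∃ s t, v 0 = x * s + b * t ∧ v 1 = y * t)
    (hN : ∀ v, v ∈ N ↔ ∃ s t, v 0 = x * s + (ε * (a * b)) * t ∧ v 1 = y * t) :
    Nonempty ((((Fin 2 → A) ⧸ NH) →ₗ[A] ((Fin 2 → A) ⧸ NG)) ≃ₗ[A] ((Fin 2 → A) ⧸ N)) := by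
  have hxy : x * y = 0 := by
    have := (hy x).2 ⟨1, by ring⟩
    exact this
  let M : (Fin 2 → A) → (Fin 2 → A) →ₗ[A] (Fin 2 → A) := fun w =>
    Matrix.toLin' !![0, ε * w 0; x * w 1, a * w 1]
  have M0 : ∀ w v, M w v 0 = ε * w 0 * v 1 := by
    intro w v; simp [M, Matrix.mulVec, dotProduct, Fin.sum_univ_two]
  have M1 : ∀ w v, M w v 1 = x * w 1 * v 0 + a * w 1 * v 1 := by
    intro w v; simp [M, Matrix.mulVec, dotProduct, Fin.sum_univ_two]
  have hM : ∀ w, NH ≤ LinearMap.ker (NG.mkQ ∘ₗ M w) := by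
    intro w v hv
    obtain ⟨s, t, h0, h1⟩ := (hH v).1 hv
    rw [LinearMap.mem_ker, LinearMap.comp_apply, Submodule.mkQ_apply,
      Submodule.Quotient.mk_eq_zero, hG]
    refine ⟨ε * w 0 * t, 0, ?_, ?_⟩
    · rw [M0, h1]; ring
    · rw [M1, h0, h1]; linear_combination (w 1 * s) * hxy
  let Φ : (Fin 2 → A) →ₗ[A] (((Fin 2 → A) ⧸ NH) →ₗ[A] ((Fin 2 → A) ⧸ NG)) :=
    { toFun := fun w => NH.liftQ (NG.mkQ ∘ₗ M w) (hM w)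
      map_add' := by
        intro w w'
        refine Submodule.linearMap_qext _ (LinearMap.ext fun v => ?_)
        have : M (w + w') v = M w v + M w' v := by
          ext i; fin_cases i
          · simp [M0]; ring
          · simp [M1]; ring
        simp [this]
      map_smul' := by
        intro c w
        refine Submodule.linearMap_qext _ (LinearMap.ext fun v => ?_)
        have : M (c • w) v = c • M w v := by
          ext i; fin_cases i
          · simp [M0]; ring
          · simp [M1]; ring
        simp [this] }
  have Φa : ∀ w v, Φ w (Submodule.Quotient.mk v) = Submodule.Quotient.mk (M w v) :=
    fun w v => rfl
  have hker : LinearMap.ker Φ = N := by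
    ext w
    rw [LinearMap.mem_ker, hN]
    constructor
    · intro h
      have e1 := Φa w ![1, 0]
      have e2 := Φa w ![0, 1]
      rw [h, LinearMap.zero_apply, eq_comm, Submodule.Quotient.mk_eq_zero, hG, M0, M1] at e1 e2
      obtain ⟨s, t, -, h1⟩ := e1
      obtain ⟨s', t', h2, h3⟩ := e2
      simp at h1 h2 h3
      have h4 := hreg _ _ h1
      obtain ⟨d, hd⟩ := (hx (w 1)).1 (by rw [mul_comm]; exact h4)
      obtain ⟨r, hr⟩ := (hy (t' - a * d)).1 (by rw [hd] at h3; linear_combination -h3)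
      refine ⟨ε * (s' + b * r), d, ?_, hd⟩
      linear_combination (-w 0) * hε + ε * h2 + ε * b * hr
    · rintro ⟨s, t, h0, h1⟩
      refine Submodule.linearMap_qext _ (LinearMap.ext fun v => ?_)
      change (Submodule.Quotient.mk (M w v) : (Fin 2 → A) ⧸ NG) = 0
      rw [Submodule.Quotient.mk_eq_zero, hG, M0, M1, h0, h1]
      refine ⟨ε * s * v 1, a * t * v 1, ?_, ?_⟩
      · linear_combination (a * b * t * v 1) * hε
      · linear_combination (t * v 0) * hxy
  have hsurj : Function.Surjective Φ := by
    intro f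
    obtain ⟨u, hu⟩ := Submodule.Quotient.mk_surjective _ (f (Submodule.Quotient.mk ![1, 0]))
    obtain ⟨v, hv⟩ := Submodule.Quotient.mk_surjective _ (f (Submodule.Quotient.mk ![0, 1]))
    have hf : ∀ z : Fin 2 → A, f (Submodule.Quotient.mk z) =
        Submodule.Quotient.mk (z 0 • u + z 1 • v) := by
      intro z
      have : z = z 0 • ![1, 0] + z 1 • ![0, 1] := by
        ext i; fin_cases i <;> simp
      conv_lhs => rw [this]
      simp only [Submodule.Quotient.mk_add, Submodule.Quotient.mk_smul, map_add, map_smul, hu, hv]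
    have hr : ∀ z ∈ NH, z 0 • u + z 1 • v ∈ NG := by
      intro z hz
      rw [← Submodule.Quotient.mk_eq_zero, ← hf, (Submodule.Quotient.mk_eq_zero _).2 hz, map_zero]
    have r1 := hr ![y, 0] ((hH _).2 ⟨1, 0, by simp, by simp⟩)
    have r2 := hr ![-a, x] ((hH _).2 ⟨0, 1, by simp, by simp⟩)
    rw [hG] at r1 r2
    obtain ⟨s, t, h1, h2⟩ := r1
    obtain ⟨s', t', h3, h4⟩ := r2
    simp at h1 h2 h3 h4
    obtain ⟨r, hr⟩ := (hy (t - u 1)).1 (by linear_combination -h2)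
    obtain ⟨c, d, hq⟩ := hab (u 1) ⟨v 1, -t', by linear_combination -h4⟩
      ⟨-s - b * r, u 0, by linear_combination -h1 - b * hr⟩
    -- y * (u 0 - b d) ∈ (x)
    have h5 : x * (s + b * r + b * c) = y * (u 0 - b * d) := by
      linear_combination -h1 - b * hr - b * hq
    have h6 := hreg _ _ h5
    obtain ⟨p, hp⟩ := (hy (u 0 - b * d)).1 (by rw [mul_comm, ← h5]; exact h6)
    -- second generator
    have h7 : x * (v 1 - a * c) = y * (t' + a * d) := by
      linear_combination h4 + a * hq
    have h8 := hreg _ _ h7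
    obtain ⟨e, he⟩ := (hx (v 1 - a * c)).1 (by rw [mul_comm]; exact h8)
    refine ⟨![ε * (v 0 - b * e), c], ?_⟩
    refine Submodule.linearMap_qext _ (LinearMap.ext fun z => ?_)
    change (Submodule.Quotient.mk (M _ z) : (Fin 2 → A) ⧸ NG) = f (Submodule.Quotient.mk z)
    rw [hf, eq_comm, Submodule.Quotient.eq, hG]
    refine ⟨z 0 * p, z 0 * d + z 1 * e, ?_, ?_⟩
    · simp [M0]
      linear_combination z 0 * hp - (v 0 - b * e) * z 1 * hε
    · simp [M1]
      linear_combination z 0 * hq + z 1 * he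
  exact ⟨((Submodule.quotEquivOfEq _ _ hker.symm).trans
    (Φ.quotKerEquivOfSurjective hsurj)).symm⟩

/-- **Theorem (7.5).** Let `x, y` be a regular exact pair of zero divisors and
let `a, b ∈ A` be such that `a` or `b` is weakly regular on `A/(x, y)`. Then
(a) `Hom_A(H_a, G_b) ≅ Hom_A(H_b, G_a) ≅ G_{ab}` and
(b) `Hom_A(G_a, H_b) ≅ Hom_A(G_b, H_a) ≅ H_{ab}`. -/
theorem hom_H_G_iso {A : Type*} [CommRing A] [IsNoetherianRing A]
    [IsLocalRing A] {x y : A} (hxy : IsExactZeroDivisorPair x y)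
    (hreg : Ideal.span ({x} : Set A) ⊓ Ideal.span ({y} : Set A) = ⊥) {a b : A}
    (hab : (Function.Injective
        fun m : A ⧸ Ideal.span ({x, y} : Set A) => a • m) ∨
      (Function.Injective
        fun m : A ⧸ Ideal.span ({x, y} : Set A) => b • m)) :
    Nonempty ((Hmod x y a →ₗ[A] Gmod x y b) ≃ₗ[A] Gmod x y (a * b)) ∧
    Nonempty ((Hmod x y b →ₗ[A] Gmod x y a) ≃ₗ[A] Gmod x y (a * b)) ∧
    Nonempty ((Gmod x y a →ₗ[A] Hmod x y b) ≃ₗ[A] Hmod x y (a * b)) ∧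
    Nonempty ((Gmod x y b →ₗ[A] Hmod x y a) ≃ₗ[A] Hmod x y (a * b)) := by
  obtain ⟨-, -, hx, hy⟩ := hxy
  have hx' : ∀ a : A, a * x = 0 ↔ ∃ c, a = y * c := fun a => by
    rw [hx, Ideal.mem_span_singleton]; rfl
  have hy' : ∀ a : A, a * y = 0 ↔ ∃ c, a = x * c := fun a => by
    rw [hy, Ideal.mem_span_singleton]; rfl
  have hr : ∀ s t : A, x * s = y * t → x * s = 0 := by
    intro s t h
    have : x * s ∈ Ideal.span ({x} : Set A) ⊓ Ideal.span ({y} : Set A) :=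
      ⟨Ideal.mem_span_singleton.2 ⟨s, rfl⟩, Ideal.mem_span_singleton.2 ⟨t, h⟩⟩
    rw [hreg] at this
    exact this
  have hr' : ∀ s t : A, y * s = x * t → y * s = 0 := fun s t h => by
    rw [h]; exact hr _ _ h.symm
  have key : ∀ c : A, (Function.Injective
        fun m : A ⧸ Ideal.span ({x, y} : Set A) => c • m) → ∀ q : A,
      (∃ s t, c * q = x * s + y * t) → ∃ s t, q = x * s + y * t := by
    rintro c hc q ⟨s, t, h⟩
    have h1 : (Ideal.Quotient.mk (Ideal.span ({x, y} : Set A)) q) = 0 := by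
      apply hc
      change Ideal.Quotient.mk _ (c * q) = c • 0
      rw [smul_zero, Ideal.Quotient.eq_zero_iff_mem, Ideal.mem_span_pair]
      exact ⟨s, t, by rw [h]; ring⟩
    rw [Ideal.Quotient.eq_zero_iff_mem, Ideal.mem_span_pair] at h1
    obtain ⟨s, t, h⟩ := h1
    exact ⟨s, t, by rw [← h]; ring⟩
  have hab1 : ∀ q : A, (∃ s t, a * q = x * s + y * t) → (∃ s t, b * q = x * s + y * t) →
      ∃ s t, q = x * s + y * t := by
    intro q h1 h2
    rcases hab with h | h
    · exact key a h q h1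
    · exact key b h q h2
  have hab2 : ∀ q : A, (∃ s t, -a * q = y * s + x * t) → (∃ s t, -b * q = y * s + x * t) →
      ∃ s t, q = y * s + x * t := by
    rintro q ⟨s, t, h1⟩ ⟨s', t', h2⟩
    obtain ⟨c, d, h⟩ := hab1 q ⟨-t, -s, by linear_combination -h1⟩
      ⟨-t', -s', by linear_combination -h2⟩
    exact ⟨d, c, by rw [h]; ring⟩
  refine ⟨?_, ?_, ?_, ?_⟩
  · refine main_aux hx' hy' hr (a := a) (b := b) 1 (by ring) hab1 _ _ _
      (fun v => ?_) (mem_range_gamma _ _ _) (fun v => ?_)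
    · rw [eta_eq_gamma, mem_range_gamma]
    · rw [mem_range_gamma, one_mul]
  · refine main_aux hx' hy' hr (a := b) (b := a) 1 (by ring) (fun q h1 h2 => hab1 q h2 h1) _ _ _
      (fun v => ?_) (mem_range_gamma _ _ _) (fun v => ?_)
    · rw [eta_eq_gamma, mem_range_gamma]
    · rw [mem_range_gamma, one_mul, mul_comm b a]
  · refine main_aux hy' hx' hr' (a := -a) (b := -b) (-1) (by ring) hab2 _ _ _
      (fun v => ?_) (fun v => ?_) (fun v => ?_)
    · rw [mem_range_gamma, neg_neg]
    · rw [eta_eq_gamma, mem_range_gamma]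
    · rw [eta_eq_gamma, mem_range_gamma, neg_mul_neg, neg_one_mul]
  · refine main_aux hy' hx' hr' (a := -b) (b := -a) (-1) (by ring)
      (fun q h1 h2 => hab2 q h2 h1) _ _ _
      (fun v => ?_) (fun v => ?_) (fun v => ?_)
    · rw [mem_range_gamma, neg_neg]
    · rw [eta_eq_gamma, mem_range_gamma]
    · rw [eta_eq_gamma, mem_range_gamma, neg_mul_neg, neg_one_mul, mul_comm b a]
end
end

section
/- Let A be a commutative noetherian local ring, let x, y ∈ A be a regular exact pair of zero divisors, let a ∈ A be weakly regular on the A-module A/(x, y), and let b ∈ A be any element. Then there are isomorphisms of A-modules: (a) Hom_A(H_a, H_{ab}) ≅ Hom_A(G_{ab}, G_a) ≅ H_b; (b) Hom_A(G_a, G_{ab}) ≅ Hom_A(H_{ab}, H_a) ≅ G_b. -/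
/-!
Formalization of results from "Construction of totally reflexive modules
from an exact pair of zero divisors" by Henrik Holm.
-/

noncomputable section

section aux
variable {A : Type*} [CommRing A]

/-- class of `(p,q)` in `G_a` -/
def mkG (x y a p q : A) : Gmod x y a := Submodule.Quotient.mk ![p, q]

theorem mem_rangeG {x y a : A} (v : Fin 2 → A) :
    v ∈ LinearMap.range (Matrix.toLin' (gammaMat x y a)) ↔
      ∃ u t, v 0 = x * u + a * t ∧ v 1 = y * t := by
  constructor
  · rintro ⟨w, rfl⟩
    exact ⟨w 0, w 1, by simp [gammaMat, Matrix.mulVec, dotProduct, Fin.sum_univ_two]⟩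
  · rintro ⟨u, t, h0, h1⟩
    refine ⟨![u, t], ?_⟩
    ext i
    fin_cases i <;> simp [gammaMat, h0, h1, Matrix.mulVec, dotProduct, Fin.sum_univ_two]

theorem mkG_eq_zero {x y a p q : A} :
    mkG x y a p q = 0 ↔ ∃ u t, p = x * u + a * t ∧ q = y * t := by
  rw [mkG, Submodule.Quotient.mk_eq_zero, mem_rangeG]
  simp

theorem mkG_add {x y a p q p' q' : A} :
    mkG x y a p q + mkG x y a p' q' = mkG x y a (p + p') (q + q') := by
  rw [mkG, mkG, ← Submodule.Quotient.mk_add]; simp [mkG]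

theorem mkG_smul {x y a p q c : A} :
    c • mkG x y a p q = mkG x y a (c * p) (c * q) := by
  rw [mkG, ← Submodule.Quotient.mk_smul]; simp [mkG]

theorem mkG_surj {x y a : A} (m : Gmod x y a) : ∃ p q, m = mkG x y a p q := by
  obtain ⟨v, rfl⟩ := Submodule.Quotient.mk_surjective _ m
  refine ⟨v 0, v 1, ?_⟩
  unfold mkG
  congr 1
  ext i; fin_cases i <;> rfl

theorem mkG_eq {x y a p q p' q' : A} :
    mkG x y a p q = mkG x y a p' q' ↔
      ∃ u t, p - p' = x * u + a * t ∧ q - q' = y * t := by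
  rw [← mkG_eq_zero, ← sub_eq_zero]
  have : mkG x y a p q - mkG x y a p' q' = mkG x y a (p - p') (q - q') := by
    rw [sub_eq_iff_eq_add, mkG_add]; simp
  rw [this]

/-- maps out of `G_a` -/
def homG {M : Type*} [AddCommGroup M] [Module A M] (x y a : A) (m1 m2 : M)
    (h1 : x • m1 = 0) (h2 : a • m1 + y • m2 = 0) : Gmod x y a →ₗ[A] M :=
  Submodule.liftQ _ (Fintype.linearCombination A ![m1, m2]) (by
    intro v hv
    obtain ⟨u, t, e0, e1⟩ := (mem_rangeG v).1 hv
    rw [LinearMap.mem_ker, Fintype.linearCombination_apply, Fin.sum_univ_two]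
    simp only [e0, e1, Matrix.cons_val_zero, Matrix.cons_val_one]
    have : (x * u + a * t) • m1 + (y * t) • m2 = u • (x • m1) + t • (a • m1 + y • m2) := by
      module
    rw [this, h1, h2]; simp)

theorem homG_apply {M : Type*} [AddCommGroup M] [Module A M] {x y a : A} {m1 m2 : M}
    {h1 : x • m1 = 0} {h2 : a • m1 + y • m2 = 0} (p q : A) :
    homG x y a m1 m2 h1 h2 (mkG x y a p q) = p • m1 + q • m2 := by
  unfold homG mkG
  rw [Submodule.liftQ_apply, Fintype.linearCombination_apply, Fin.sum_univ_two]
  simp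

theorem homG_ext {M : Type*} [AddCommGroup M] [Module A M] {x y a : A}
    {f g : Gmod x y a →ₗ[A] M} (h1 : f (mkG x y a 1 0) = g (mkG x y a 1 0))
    (h2 : f (mkG x y a 0 1) = g (mkG x y a 0 1)) : f = g := by
  refine LinearMap.ext fun m => ?_
  obtain ⟨p, q, rfl⟩ := mkG_surj m
  have e : mkG x y a p q = p • mkG x y a 1 0 + q • mkG x y a 0 1 := by
    rw [mkG_smul, mkG_smul, mkG_add]; simp
  rw [e, map_add, map_add, map_smul, map_smul, map_smul, map_smul, h1, h2]

theorem hom_rel {M : Type*} [AddCommGroup M] [Module A M] {x y a : A}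
    (f : Gmod x y a →ₗ[A] M) : x • f (mkG x y a 1 0) = 0 ∧
      a • f (mkG x y a 1 0) + y • f (mkG x y a 0 1) = 0 := by
  constructor
  · rw [← map_smul, mkG_smul, mkG_eq_zero.2 ⟨1, 0, by simp, by simp⟩, map_zero]
  · rw [← map_smul, ← map_smul, ← map_add, mkG_smul, mkG_smul, mkG_add,
      mkG_eq_zero.2 ⟨0, 1, by simp, by simp⟩, map_zero]

/-- presentation of a module by two generators -/
theorem equivG {M : Type*} [AddCommGroup M] [Module A M] {x y a : A} (m1 m2 : M)
    (hs : ∀ m : M, ∃ p q : A, m = p • m1 + q • m2)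
    (hk : ∀ p q : A, p • m1 + q • m2 = 0 ↔ ∃ u t, p = x * u + a * t ∧ q = y * t) :
    Nonempty (M ≃ₗ[A] Gmod x y a) := by
  have h1 : x • m1 = 0 := by
    have := (hk x 0).2 ⟨1, 0, by simp, by simp⟩
    simpa using this
  have h2 : a • m1 + y • m2 = 0 := (hk a y).2 ⟨0, 1, by simp, by simp⟩
  refine ⟨(LinearEquiv.ofBijective (homG x y a m1 m2 h1 h2) ⟨?_, ?_⟩).symm⟩
  · rw [injective_iff_map_eq_zero]
    intro m hm
    obtain ⟨p, q, rfl⟩ := mkG_surj m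
    rw [homG_apply, hk] at hm
    exact mkG_eq_zero.2 hm
  · intro m
    obtain ⟨p, q, rfl⟩ := hs m
    exact ⟨mkG x y a p q, homG_apply p q⟩

theorem negG (x y b : A) : Nonempty (Gmod x y b ≃ₗ[A] Gmod x y (-b)) := by
  refine equivG (mkG x y b (-1) 0) (mkG x y b 0 1) ?_ ?_
  · intro m
    obtain ⟨p, q, rfl⟩ := mkG_surj m
    exact ⟨-p, q, by rw [mkG_smul, mkG_smul, mkG_add]; simp⟩
  · intro p q
    rw [mkG_smul, mkG_smul, mkG_add, mkG_eq_zero]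
    constructor
    · rintro ⟨u, t, h1, h2⟩
      exact ⟨-u, t, by linear_combination -h1, by linear_combination h2⟩
    · rintro ⟨u, t, h1, h2⟩
      exact ⟨-u, t, by linear_combination -h1, by linear_combination h2⟩

/-- elementwise hypotheses -/
structure Good (x y a : A) : Prop where
  xy : x * y = 0
  annx : ∀ c, x * c = 0 → ∃ d, c = y * d
  anny : ∀ c, y * c = 0 → ∃ d, c = x * d
  inter : ∀ c d, x * c = y * d → x * c = 0
  reg : ∀ c u v, a * c = x * u + y * v → ∃ u v, c = x * u + y * v

theorem Good.symm {x y a : A} (h : Good x y a) : Good y x (-a) where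
  xy := by rw [mul_comm]; exact h.xy
  annx := h.anny
  anny := h.annx
  inter c d e := by rw [e]; exact h.inter d c e.symm
  reg c u v e := by
    obtain ⟨u', v', e'⟩ := h.reg c (-v) (-u) (by linear_combination -e)
    exact ⟨v', u', by rw [e', add_comm]⟩

/-- elements killed by `x` -/
theorem Good.killed {x y a c : A} (h : Good x y a) (m : Gmod x y c) (hm : x • m = 0) :
    ∃ p, m = mkG x y c p 0 := by
  obtain ⟨p, q, rfl⟩ := mkG_surj m
  rw [mkG_smul, mkG_eq_zero] at hm
  obtain ⟨u, t, h1, h2⟩ := hm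
  obtain ⟨d, rfl⟩ := h.annx q (h.inter _ _ h2)
  exact ⟨p - c * d, mkG_eq.2 ⟨0, d, by ring, by ring⟩⟩

theorem Good.L1 {x y a : A} (h : Good x y a) (b : A) :
    Nonempty ((Gmod x y a →ₗ[A] Gmod x y (a * b)) ≃ₗ[A] Gmod x y b) := by
  have hxy := h.xy
  refine equivG
    (homG x y a (mkG x y (a * b) (-y) 0) (mkG x y (a * b) a 0) ?_ ?_)
    (homG x y a (mkG x y (a * b) b 0) (mkG x y (a * b) 0 1) ?_ ?_) ?_ ?_
  · rw [mkG_smul, mkG_eq_zero]; exact ⟨0, 0, by linear_combination -hxy, by ring⟩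
  · rw [mkG_smul, mkG_smul, mkG_add, mkG_eq_zero]; exact ⟨0, 0, by ring, by ring⟩
  · rw [mkG_smul, mkG_eq_zero]; exact ⟨b, 0, by ring, by ring⟩
  · rw [mkG_smul, mkG_smul, mkG_add, mkG_eq_zero]; exact ⟨0, 1, by ring, by ring⟩
  · intro f
    obtain ⟨r1, r2⟩ := hom_rel f
    obtain ⟨p, hp⟩ := h.killed _ r1
    obtain ⟨r, s, hs⟩ := mkG_surj (f (mkG x y a 0 1))
    rw [hp, hs, mkG_smul, mkG_smul, mkG_add, mkG_eq_zero] at r2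
    obtain ⟨u, t, e1, e2⟩ := r2
    obtain ⟨w, hw⟩ := h.anny (s - t) (by linear_combination e2)
    obtain ⟨k, v, hv⟩ := h.reg (p - b * s) (u - a * b * w) (-r)
      (by linear_combination e1 - a * b * hw)
    obtain ⟨j, hj⟩ := h.anny (a * v + r) (by
      have e : x * (u - a * b * w - a * k) = y * (a * v + r) := by
        linear_combination -e1 + a * b * hw + a * hv
      rw [← e]; exact h.inter _ _ e)
    refine ⟨-v, s, homG_ext ?_ ?_⟩
    · rw [hp]
      simp only [LinearMap.add_apply, LinearMap.smul_apply, homG_apply, mkG_smul, mkG_add]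
      exact mkG_eq.2 ⟨k, 0, by linear_combination hv, by ring⟩
    · rw [hs]
      simp only [LinearMap.add_apply, LinearMap.smul_apply, homG_apply, mkG_smul, mkG_add]
      exact mkG_eq.2 ⟨j, 0, by linear_combination hj, by ring⟩
  · intro p q
    constructor
    · intro e
      have e1 := LinearMap.congr_fun e (mkG x y a 1 0)
      have e2 := LinearMap.congr_fun e (mkG x y a 0 1)
      simp only [LinearMap.add_apply, LinearMap.smul_apply, homG_apply, mkG_smul, mkG_add,
        LinearMap.zero_apply, mkG_eq_zero] at e1 e2
      obtain ⟨u, t, e1, e1'⟩ := e1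
      obtain ⟨u', t', e2, e2'⟩ := e2
      obtain ⟨w, hw⟩ := h.anny t (by linear_combination -e1')
      obtain ⟨k, l, hl⟩ := h.reg (p - b * t') u' 0 (by linear_combination e2)
      have e3 : x * (u + a * b * w) = y * (- (y * l)) := by
        linear_combination -e1 - y * hl + b * e2' - a * b * hw - k * hxy
      have e4 := h.inter _ _ e3
      obtain ⟨i, hi⟩ := h.anny (y * l) (by linear_combination e3 - e4)
      have e5 := h.inter _ _ hi.symm
      exact ⟨k, t', by linear_combination hl + hi + e5, by linear_combination e2'⟩
    · rintro ⟨u, t, rfl, rfl⟩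
      refine homG_ext ?_ ?_
      · simp only [LinearMap.add_apply, LinearMap.smul_apply, homG_apply, mkG_smul, mkG_add,
          LinearMap.zero_apply, mkG_eq_zero]
        exact ⟨0, 0, by linear_combination -u * hxy, by ring⟩
      · simp only [LinearMap.add_apply, LinearMap.smul_apply, homG_apply, mkG_smul, mkG_add,
          LinearMap.zero_apply, mkG_eq_zero]
        exact ⟨a * u, t, by ring, by ring⟩

theorem Good.L2 {x y a : A} (h : Good x y a) (b : A) :
    Nonempty ((Gmod x y (a * b) →ₗ[A] Gmod x y a) ≃ₗ[A] Gmod y x (-b)) := by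
  have hxy := h.xy
  refine equivG
    (homG x y (a * b) (mkG x y a 0 0) (mkG x y a 0 x) ?_ ?_)
    (homG x y (a * b) (mkG x y a 1 0) (mkG x y a 0 b) ?_ ?_) ?_ ?_
  · rw [mkG_smul, mkG_eq_zero]; exact ⟨0, 0, by ring, by ring⟩
  · rw [mkG_smul, mkG_smul, mkG_add, mkG_eq_zero]
    exact ⟨0, 0, by ring, by linear_combination hxy⟩
  · rw [mkG_smul, mkG_eq_zero]; exact ⟨1, 0, by ring, by ring⟩
  · rw [mkG_smul, mkG_smul, mkG_add, mkG_eq_zero]; exact ⟨0, b, by ring, by ring⟩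
  · intro f
    obtain ⟨r1, r2⟩ := hom_rel f
    obtain ⟨p, hp⟩ := h.killed _ r1
    obtain ⟨r, s, hs⟩ := mkG_surj (f (mkG x y (a * b) 0 1))
    rw [hp, hs, mkG_smul, mkG_smul, mkG_add, mkG_eq_zero] at r2
    obtain ⟨u, t, e1, e2⟩ := r2
    obtain ⟨w, hw⟩ := h.anny (s - t) (by linear_combination e2)
    obtain ⟨k, l, hl⟩ := h.reg (s - b * p) (a * w - u) r
      (by linear_combination -e1 + a * hw)
    obtain ⟨j, hj⟩ := h.anny (r - a * l) (by
      have e : x * (u - a * w + a * k) = y * (r - a * l) := by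
        linear_combination -e1 + a * hw - a * hl
      rw [← e]; exact h.inter _ _ e)
    refine ⟨k, p, homG_ext ?_ ?_⟩
    · rw [hp]
      simp only [LinearMap.add_apply, LinearMap.smul_apply, homG_apply, mkG_smul, mkG_add]
      exact mkG_eq.2 ⟨0, 0, by ring, by ring⟩
    · rw [hs]
      simp only [LinearMap.add_apply, LinearMap.smul_apply, homG_apply, mkG_smul, mkG_add]
      exact mkG_eq.2 ⟨j, l, by linear_combination hj, by linear_combination hl⟩
  · intro k p
    constructor
    · intro e
      have e1 := LinearMap.congr_fun e (mkG x y (a * b) 1 0)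
      have e2 := LinearMap.congr_fun e (mkG x y (a * b) 0 1)
      simp only [LinearMap.add_apply, LinearMap.smul_apply, homG_apply, mkG_smul, mkG_add,
        LinearMap.zero_apply, mkG_eq_zero] at e1 e2
      obtain ⟨u, t, e1, e1'⟩ := e1
      obtain ⟨u', t', e2, e2'⟩ := e2
      obtain ⟨w, hw⟩ := h.anny t (by linear_combination -e1')
      have e3 : x * (k + b * (u + a * w)) = y * t' := by
        linear_combination e2' - b * e1 - a * b * hw
      obtain ⟨l, hl⟩ := h.annx _ (h.inter _ _ e3)
      exact ⟨l, u + a * w, by linear_combination hl, by linear_combination e1 + a * hw⟩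
    · rintro ⟨u, t, rfl, rfl⟩
      refine homG_ext ?_ ?_
      · simp only [LinearMap.add_apply, LinearMap.smul_apply, homG_apply, mkG_smul, mkG_add,
          LinearMap.zero_apply, mkG_eq_zero]
        exact ⟨t, 0, by ring, by ring⟩
      · simp only [LinearMap.add_apply, LinearMap.smul_apply, homG_apply, mkG_smul, mkG_add,
          LinearMap.zero_apply, mkG_eq_zero]
        exact ⟨0, 0, by ring, by linear_combination u * hxy⟩

end aux

/-- **Theorem (7.7).** Let `x, y` be a regular exact pair of zero divisors,
let `a ∈ A` be weakly regular on `A/(x, y)` and let `b ∈ A` be any element.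
Then (a) `Hom_A(H_a, H_{ab}) ≅ Hom_A(G_{ab}, G_a) ≅ H_b` and
(b) `Hom_A(G_a, G_{ab}) ≅ Hom_A(H_{ab}, H_a) ≅ G_b`. -/
theorem hom_G_mul_G_iso {A : Type*} [CommRing A] [IsNoetherianRing A]
    [IsLocalRing A] {x y : A} (hxy : IsExactZeroDivisorPair x y)
    (hreg : Ideal.span ({x} : Set A) ⊓ Ideal.span ({y} : Set A) = ⊥) {a : A}
    (ha : Function.Injective
      fun m : A ⧸ Ideal.span ({x, y} : Set A) => a • m) (b : A) :
    Nonempty ((Hmod x y a →ₗ[A] Hmod x y (a * b)) ≃ₗ[A] Hmod x y b) ∧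
    Nonempty ((Gmod x y (a * b) →ₗ[A] Gmod x y a) ≃ₗ[A] Hmod x y b) ∧
    Nonempty ((Gmod x y a →ₗ[A] Gmod x y (a * b)) ≃ₗ[A] Gmod x y b) ∧
    Nonempty ((Hmod x y (a * b) →ₗ[A] Hmod x y a) ≃ₗ[A] Gmod x y b) := by
  have h : Good x y a := by
    obtain ⟨-, -, hx, hy⟩ := hxy
    refine ⟨?_, ?_, ?_, ?_, ?_⟩
    · exact (hy x).2 (Ideal.mem_span_singleton_self x)
    · intro c hc
      exact Ideal.mem_span_singleton.1 ((hx c).1 (by rw [mul_comm]; exact hc))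
    · intro c hc
      exact Ideal.mem_span_singleton.1 ((hy c).1 (by rw [mul_comm]; exact hc))
    · intro c d e
      have : x * c ∈ Ideal.span ({x} : Set A) ⊓ Ideal.span ({y} : Set A) :=
        ⟨Ideal.mem_span_singleton.2 ⟨c, rfl⟩, Ideal.mem_span_singleton.2 ⟨d, e⟩⟩
      rw [hreg] at this
      exact this
    · intro c u v e
      have h1 : a * c ∈ Ideal.span ({x, y} : Set A) :=
        Ideal.mem_span_pair.2 ⟨u, v, by linear_combination -e⟩
      have h2 : (Ideal.Quotient.mk (Ideal.span ({x, y} : Set A)) c) = 0 := by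
        apply ha
        simp only [smul_zero]
        have := Ideal.Quotient.eq_zero_iff_mem.2 h1
        exact this
      obtain ⟨u', v', e'⟩ := Ideal.mem_span_pair.1 (Ideal.Quotient.eq_zero_iff_mem.1 h2)
      exact ⟨u', v', by linear_combination -e'⟩
  have hs := h.symm
  have hH : ∀ c : A, Hmod x y c = Gmod y x (-c) := fun _ => rfl
  obtain ⟨n1⟩ := negG y x b
  obtain ⟨n2⟩ := negG x y (-b)
  rw [neg_neg] at n2
  obtain ⟨e1⟩ := hs.L1 b
  obtain ⟨e2⟩ := hs.L2 b
  rw [neg_mul] at e1 e2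
  exact ⟨⟨e1.trans n1⟩, h.L2 b, h.L1 b, ⟨e2.trans n2⟩⟩
end
end
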